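/- arXiv:2404.13773 — 4 statements merged into one kernel-verified Lean document; each statement's English description precedes it below -/
import Mathlib

section
/- The Kraus operators of the second Hamiltonian path P₂ = (f, j, h) of G(Π₂) satisfy the Choi–Kraus normalization: S_f* S_f + S_j* S_j + S_h* S_h = 1, where 1 is the identity operator on H. -/
/- Hilbert space `H = ℓ²(ℕ₊, ℂ)` with standard orthonormal basis `(e m)` indexed by the
positive integers `ℕ+`. -/

noncomputable section

open ContinuousLinearMap

/-- The Hilbert space `ℓ²(ℕ₊, ℂ)` of square-summable complex sequences indexed by the
positive integers. -/
abbrev H : Type := lp (fun _ : ℕ+ => ℂ) 2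

/-- The standard orthonormal basis vector `e m` of `H`, for `m ≥ 1`. -/
def e (m : ℕ+) : H := lp.single 2 m 1

/-- `MapsBasis S a b` says that the bounded operator `S` sends the basis vector `e (a n)` to
`e (b n)` for every `n ≥ 1`, and sends to `0` every basis vector not of the form `e (a n)`;
i.e. `S = Σ_{n ≥ 1} E_{b n, a n}` as in the paper. -/
def MapsBasis (S : H →L[ℂ] H) (a b : ℕ+ → ℕ+) : Prop :=
  (∀ n : ℕ+, S (e (a n)) = e (b n)) ∧ ∀ m : ℕ+, (∀ n : ℕ+, m ≠ a n) → S (e m) = 0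

/-!
Since `b` is injective, the adjoint of `S = ∑ E_{b n, a n}` is `∑ E_{a n, b n}`, so `S* S` is the
orthogonal projection onto the closed span of the `e (a n)`. For `S_f`, `S_j`, `S_h` the indices
`a n` run through the three residue classes modulo `3`, so the projections add up to `1`.
-/

theorem inner_e_left (k : ℕ+) (v : H) : inner ℂ (e k) v = v k := by
  simp [e, lp.inner_single_left]

theorem orthonormal_e : Orthonormal ℂ e := by
  rw [orthonormal_iff_ite]
  intro k m
  rw [inner_e_left, e, lp.single_apply, Pi.single_apply]

theorem ext_inner_e {v w : H} (h : ∀ k, inner ℂ (e k) v = inner ℂ (e k) w) : v = w :=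
  lp.ext <| funext fun k => by simpa only [inner_e_left] using h k

theorem ext_apply_e {S T : H →L[ℂ] H} (h : ∀ m, S (e m) = T (e m)) : S = T :=
  lp.ext_continuousLinearMap (by simp) fun m => by
    ext1
    simpa [e] using h m

namespace MapsBasis

variable {S T : H →L[ℂ] H} {a b c : ℕ+ → ℕ+}

theorem apply_eq_zero (hS : MapsBasis S a b) {m : ℕ+} (hm : m ∉ Set.range a) : S (e m) = 0 :=
  hS.2 m fun n hn => hm ⟨n, hn.symm⟩

theorem injective_left (hS : MapsBasis S a b) (hb : b.Injective) : a.Injective := by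
  intro p n hpn
  apply hb
  apply orthonormal_e.linearIndependent.injective
  rw [← hS.1 p, ← hS.1 n, hpn]

theorem comp (hT : MapsBasis T b c) (hS : MapsBasis S a b) : MapsBasis (T ∘L S) a c :=
  ⟨fun n => by rw [comp_apply, hS.1, hT.1], fun m hm => by rw [comp_apply, hS.2 m hm, map_zero]⟩

theorem adjoint (hS : MapsBasis S a b) (hb : b.Injective) :
    MapsBasis (ContinuousLinearMap.adjoint S) b a := by
  have ha : a.Injective := hS.injective_left hb
  have inner_e_e := orthonormal_iff_ite.mp orthonormal_e
  constructor
  · refine fun n => ext_inner_e fun k => ?_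
    rw [adjoint_inner_right]
    by_cases hk : k ∈ Set.range a
    · obtain ⟨p, rfl⟩ := hk
      simp only [hS.1, inner_e_e, ha.eq_iff, hb.eq_iff]
    · have hkn : k ≠ a n := fun h => hk ⟨n, h.symm⟩
      rw [hS.apply_eq_zero hk, inner_zero_left, inner_e_e, if_neg hkn]
  · refine fun m hm => ext_inner_e fun k => ?_
    rw [adjoint_inner_right, inner_zero_right]
    by_cases hk : k ∈ Set.range a
    · obtain ⟨p, rfl⟩ := hk
      rw [hS.1, inner_e_e, if_neg (hm p).symm]
    · rw [hS.apply_eq_zero hk, inner_zero_left]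

theorem adjoint_comp_self (hS : MapsBasis S a b) (hb : b.Injective) :
    MapsBasis (ContinuousLinearMap.adjoint S ∘L S) a a :=
  (hS.adjoint hb).comp hS

theorem sum_eq_one {ι : Type*} [Fintype ι] {P : ι → H →L[ℂ] H} {a : ι → ℕ+ → ℕ+}
    (hP : ∀ i, MapsBasis (P i) (a i) (a i)) (ha : ∀ m, ∃! i, m ∈ Set.range (a i)) :
    ∑ i, P i = 1 := by
  refine ext_apply_e fun m => ?_
  obtain ⟨i, ⟨n, rfl⟩, hi⟩ := ha m
  have other_eq_zero : ∀ j ≠ i, P j (e (a i n)) = 0 := fun j hj =>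
    (hP j).apply_eq_zero fun hmem => hj (hi j hmem)
  rw [sum_apply, Fintype.sum_eq_single i other_eq_zero, (hP i).1, one_apply_eq_self]

theorem sum_adjoint_comp_self_eq_one {ι : Type*} [Fintype ι] {S : ι → H →L[ℂ] H}
    {a b : ι → ℕ+ → ℕ+} (hS : ∀ i, MapsBasis (S i) (a i) (b i)) (hb : ∀ i, (b i).Injective)
    (ha : ∀ m, ∃! i, m ∈ Set.range (a i)) :
    ∑ i, ContinuousLinearMap.adjoint (S i) ∘L S i = 1 :=
  sum_eq_one (fun i => (hS i).adjoint_comp_self (hb i)) ha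

end MapsBasis

section ArithmeticProgression

variable {d r : ℕ+}

theorem pnat_mul_sub_add (hr : r < d) (n : ℕ+) : d * n - r + r = d * n :=
  PNat.sub_add_of_lt (hr.trans_le (le_mul_of_one_le_right' one_le))

theorem pnat_mul_sub_injective (hr : r < d) : Function.Injective fun n : ℕ+ => d * n - r := by
  intro p n (hpn : d * p - r = d * n - r)
  apply mul_left_cancel (a := d)
  rw [← pnat_mul_sub_add hr p, hpn, pnat_mul_sub_add hr n]

theorem mem_range_pnat_mul_sub_iff (hr : r < d) {m : ℕ+} :
    m ∈ Set.range (fun n : ℕ+ => d * n - r) ↔ d ∣ m + r :=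
  exists_congr fun n => by
    rw [← pnat_mul_sub_add hr n, add_left_inj, eq_comm]

theorem mem_range_pnat_mul_iff {m : ℕ+} : m ∈ Set.range (fun n : ℕ+ => d * n) ↔ d ∣ m :=
  exists_congr fun _ => eq_comm

end ArithmeticProgression

/-- The index maps `a` for which `S_f`, `S_j`, `S_h`, in the order of the path `P₂`, are nonzero
exactly on the basis vectors `e (a n)`. -/
def sourceIndex : Fin 3 → ℕ+ → ℕ+ :=
  ![fun n => 3 * n - 2, fun n => 3 * n - 1, fun n => 3 * n]

theorem mem_range_sourceIndex_iff {m : ℕ+} (i : Fin 3) :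
    m ∈ Set.range (sourceIndex i) ↔ 3 ∣ (m : ℕ) + (2 - i) := by
  fin_cases i
  · exact (mem_range_pnat_mul_sub_iff (by decide)).trans PNat.dvd_iff
  · exact (mem_range_pnat_mul_sub_iff (by decide)).trans PNat.dvd_iff
  · exact mem_range_pnat_mul_iff.trans PNat.dvd_iff

theorem existsUnique_mem_range_sourceIndex (m : ℕ+) : ∃! i, m ∈ Set.range (sourceIndex i) := by
  simp only [mem_range_sourceIndex_iff]
  refine ⟨⟨(m + 2) % 3, by omega⟩, ?_, fun j hj => Fin.ext ?_⟩ <;> dsimp only <;> omega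

/-- Choi–Kraus normalization for the second Hamiltonian path `P₂ = (f, j, h)` of `G(Π₂)`:
`S_f* S_f + S_j* S_j + S_h* S_h = 1`. -/
theorem stmt_3
    (Sf Sj Sh : H →L[ℂ] H)
    (hSf : MapsBasis Sf (fun n => 3 * n - 2) (fun n => 6 * n - 4))
    (hSj : MapsBasis Sj (fun n => 3 * n - 1) (fun n => 6 * n - 3))
    (hSh : MapsBasis Sh (fun n => 3 * n) (fun n => 6 * n - 3)) :
    adjoint Sf ∘L Sf + adjoint Sj ∘L Sj + adjoint Sh ∘L Sh = 1 := by
  have hS : ∀ i, MapsBasis (![Sf, Sj, Sh] i) (sourceIndex i)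
      (![fun n => 6 * n - 4, fun n => 6 * n - 3, fun n => 6 * n - 3] i) := by
    intro i
    fin_cases i
    exacts [hSf, hSj, hSh]
  have target_injective : ∀ i, Function.Injective
      ((![fun n => 6 * n - 4, fun n => 6 * n - 3, fun n => 6 * n - 3] : Fin 3 → ℕ+ → ℕ+) i) := by
    intro i
    fin_cases i <;> exact pnat_mul_sub_injective (by decide)
  have sum_eq_one :=
    MapsBasis.sum_adjoint_comp_self_eq_one hS target_injective existsUnique_mem_range_sourceIndex
  rwa [Fin.sum_univ_three] at sum_eq_one
end
end

section
/- The smallest closed star-subalgebra of the algebra of bounded operators on H containing the six operators S_e, S_f, S_g, S_h, S_i, S_j is infinite-dimensional as a complex vector space (i.e., the graph C*-algebra C*(Π₂) generated by this Cuntz–Krieger family is infinite-dimensional). -/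
/- Hilbert space `H = ℓ²(ℕ₊, ℂ)` with standard orthonormal basis `(e m)` indexed by the
positive integers `ℕ+`. -/

noncomputable section

open ContinuousLinearMap

/-! The operator `S_h` moves along the infinite orbit `e 6 ↦ e 9 ↦ e 15 ↦ e 27 ↦ ⋯` of basis
vectors, `e (3 * (2 ^ k + 1)) ↦ e (3 * (2 ^ (k + 1) + 1))`. Evaluating a polynomial in `S_h` at
`e 6` therefore reads off its coefficients, so `S_h` is transcendental over `ℂ`, whereas every
element of a finite-dimensional algebra is algebraic. -/

theorem transcendental_of_linearIndependent_pow {R A : Type*} [CommRing R] [Ring A] [Algebra R A]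
    {x : A} (h : LinearIndependent R fun k : ℕ => x ^ k) : Transcendental R x := by
  have h_lsmul : LinearIndependent R fun k : ℕ => (Algebra.lsmul R R A x ^ k) 1 := by
    simpa only [← map_pow, Algebra.lsmul_coe, smul_eq_mul, mul_one] using h
  refine transcendental_iff.2 fun p hp =>
    (Polynomial.linearIndependent_powers_iff_aeval _ 1).1 h_lsmul p ?_
  rw [Polynomial.aeval_algHom_apply, hp, map_zero, LinearMap.zero_apply]

theorem not_finiteDimensional_of_transcendental_mem {K A : Type*} [Field K] [Ring A] [Algebra K A]
    {B : Subalgebra K A} {x : A} (hx : Transcendental K x) (hxB : x ∈ B) :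
    ¬ FiniteDimensional K B :=
  fun _ => hx ((IsAlgebraic.of_finite K (⟨x, hxB⟩ : B)).algHom B.val)

namespace MapsBasis

variable {S : H →L[ℂ] H} {a b : ℕ+ → ℕ+} {u : ℕ → ℕ+}

theorem pow_apply_e (hS : MapsBasis S a b) (hu : ∀ k, b (u k) = a (u (k + 1))) (k : ℕ) :
    (S ^ k) (e (a (u 0))) = e (a (u k)) := by
  induction k with
  | zero => rfl
  | succ k ih => rw [pow_succ', mul_apply_eq_comp, ih, hS.1, hu]

theorem transcendental (hS : MapsBasis S a b) (hu : ∀ k, b (u k) = a (u (k + 1)))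
    (hinj : Function.Injective (a ∘ u)) : Transcendental ℂ S := by
  have h_orbit : LinearIndependent ℂ fun k : ℕ => (S ^ k) (e (a (u 0))) := by
    simp only [hS.pow_apply_e hu]
    exact orthonormal_e.linearIndependent.comp _ hinj
  exact transcendental_of_linearIndependent_pow
    (h_orbit.of_comp (ContinuousLinearMap.apply ℂ H (e (a (u 0)))).toLinearMap)

end MapsBasis

theorem six_mul_two_pow_add_one_sub_three (k : ℕ) :
    (6 * (2 ^ k + 1) - 3 : ℕ+) = 3 * (2 ^ (k + 1) + 1) := by
  have h_add : (6 * (2 ^ k + 1) : ℕ+) = 3 * (2 ^ (k + 1) + 1) + 3 := by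
    apply PNat.eq
    push_cast
    ring
  rw [h_add, PNat.add_sub]

theorem injective_three_mul_two_pow_add_one :
    Function.Injective fun k : ℕ => (3 * (2 ^ k + 1) : ℕ+) :=
  (mul_right_injective 3).comp <| (add_left_injective 1).comp
    (pow_right_strictMono' (by decide)).injective

theorem stmt_8_general {S : H →L[ℂ] H}
    (hS : MapsBasis S (fun n => 3 * n) (fun n => 6 * n - 3))
    {A : Subalgebra ℂ (H →L[ℂ] H)} (hSA : S ∈ A) : ¬ FiniteDimensional ℂ A :=
  not_finiteDimensional_of_transcendental_mem
    (hS.transcendental (u := fun k => 2 ^ k + 1) six_mul_two_pow_add_one_sub_three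
      injective_three_mul_two_pow_add_one) hSA

/-- The smallest closed star-subalgebra of `B(H)` containing the six operators of the
Cuntz–Krieger `G(Π₂)`-family (i.e. the graph C*-algebra `C*(Π₂)`) is infinite-dimensional
over `ℂ`. -/
theorem stmt_8
    (Se Sf Sg Sh Si Sj : H →L[ℂ] H)
    (hSe : MapsBasis Se (fun n => 3 * n - 2) (fun n => 6 * n))
    (hSf : MapsBasis Sf (fun n => 3 * n - 2) (fun n => 6 * n - 4))
    (hSg : MapsBasis Sg (fun n => 3 * n - 1) (fun n => 6 * n - 4))
    (hSh : MapsBasis Sh (fun n => 3 * n) (fun n => 6 * n - 3))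
    (hSi : MapsBasis Si (fun n => 3 * n) (fun n => 6 * n - 1))
    (hSj : MapsBasis Sj (fun n => 3 * n - 1) (fun n => 6 * n - 3)) :
    ¬ FiniteDimensional ℂ
      ((StarAlgebra.adjoin ℂ ({Se, Sf, Sg, Sh, Si, Sj} : Set (H →L[ℂ] H))).topologicalClosure) := by
  exact stmt_8_general hSh (StarSubalgebra.le_topologicalClosure _
    (StarAlgebra.subset_adjoin ℂ _ (by simp)))
end
end

section
/- Each of the eight operators S_{j1}, …, S_{j8} is a partial isometry (S S* S = S), and together they satisfy the Choi–Kraus normalization Σ_{k=1}^{8} S_{jk}* S_{jk} = 1, where 1 is the identity operator on H (this is the quantum-channel condition for the Hamiltonian path H₆ of G(Π₃)). -/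
/- Hilbert space `H = ℓ²(ℕ₊, ℂ)` with standard orthonormal basis `(e m)` indexed by the
positive integers `ℕ+`. -/

noncomputable section

open ContinuousLinearMap

/-!
An operator that maps the basis vectors indexed by a set `s` to an orthonormal family and kills all
other basis vectors is a partial isometry, and `S* S` is the projection onto the closed span of the
basis vectors indexed by `s`. The initial sets of `S_{j1}, …, S_{j8}` are the eight residue classes
modulo `8`, hence the eight projections add up to the identity.
-/

section HilbertBasis

variable {ι 𝕜 E F : Type*} [RCLike 𝕜] [NormedAddCommGroup E] [InnerProductSpace 𝕜 E]
  [NormedAddCommGroup F] [InnerProductSpace 𝕜 F]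

theorem ext_inner_left_hilbertBasis (v : HilbertBasis ι 𝕜 E) {x y : E}
    (h : ∀ i, inner 𝕜 (v i) x = inner 𝕜 (v i) y) : x = y := by
  refine v.repr.injective (lp.ext (funext fun i => ?_))
  simpa only [v.repr_apply_apply] using h i

theorem ext_continuousLinearMap_hilbertBasis (v : HilbertBasis ι 𝕜 E) {S T : E →L[𝕜] F}
    (h : ∀ i, S (v i) = T (v i)) : S = T :=
  ContinuousLinearMap.ext_on (Submodule.dense_iff_topologicalClosure_eq_top.2 v.dense_span)
    (Set.forall_mem_range.2 h)

/-- `S` is a partial isometry adapted to the Hilbert basis `v`, with initial space the closed span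
of the `v i`, `i ∈ s`: it maps these vectors to an orthonormal family and kills the other basis
vectors. -/
structure IsPartialIsometryOnBasis (v : HilbertBasis ι 𝕜 E) (S : E →L[𝕜] F) (s : Set ι) :
    Prop where
  orthonormal : Orthonormal 𝕜 fun i : s => S (v i)
  apply_eq_zero : ∀ i ∉ s, S (v i) = 0

namespace IsPartialIsometryOnBasis

variable {v : HilbertBasis ι 𝕜 E} {S : E →L[𝕜] F} {s : Set ι}

theorem inner_apply_apply (h : IsPartialIsometryOnBasis v S s) (i : ι) {j : ι} (hj : j ∈ s) :
    inner 𝕜 (S (v i)) (S (v j)) = inner 𝕜 (v i) (v j) := by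
  classical
  by_cases hi : i ∈ s
  · have hS := orthonormal_iff_ite.1 h.orthonormal ⟨i, hi⟩ ⟨j, hj⟩
    simpa only [Subtype.mk.injEq, ← orthonormal_iff_ite.1 v.orthonormal i j] using hS
  · have hij : i ≠ j := fun hij => hi (hij ▸ hj)
    rw [h.apply_eq_zero i hi, inner_zero_left, v.orthonormal.inner_eq_zero hij]

variable [CompleteSpace E] [CompleteSpace F]

theorem adjoint_apply_apply_of_mem (h : IsPartialIsometryOnBasis v S s) {i : ι} (hi : i ∈ s) :
    adjoint S (S (v i)) = v i :=
  ext_inner_left_hilbertBasis v fun k => by rw [adjoint_inner_right, h.inner_apply_apply k hi]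

theorem adjoint_apply_apply_of_notMem (h : IsPartialIsometryOnBasis v S s) {i : ι} (hi : i ∉ s) :
    adjoint S (S (v i)) = 0 := by
  rw [h.apply_eq_zero i hi, map_zero]

theorem comp_adjoint_comp (h : IsPartialIsometryOnBasis v S s) : S ∘L adjoint S ∘L S = S := by
  refine ext_continuousLinearMap_hilbertBasis v fun i => ?_
  by_cases hi : i ∈ s
  · exact congrArg S (h.adjoint_apply_apply_of_mem hi)
  · simp only [comp_apply, h.apply_eq_zero i hi, map_zero]

theorem sum_adjoint_comp_eq_one {κ : Type*} [Fintype κ] {S : κ → E →L[𝕜] F} {s : κ → Set ι}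
    (h : ∀ k, IsPartialIsometryOnBasis v (S k) (s k)) (hs : ∀ i, ∃! k, i ∈ s k) :
    ∑ k, adjoint (S k) ∘L S k = 1 := by
  refine ext_continuousLinearMap_hilbertBasis v fun i => ?_
  obtain ⟨k, hik, hk_unique⟩ := hs i
  calc (∑ l, adjoint (S l) ∘L S l) (v i) = ∑ l, adjoint (S l) (S l (v i)) := by
        simp only [sum_apply, comp_apply]
    _ = adjoint (S k) (S k (v i)) := Fintype.sum_eq_single k fun l hlk =>
        (h l).adjoint_apply_apply_of_notMem fun hil => hlk (hk_unique l hil)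
    _ = v i := (h k).adjoint_apply_apply_of_mem hik

end IsPartialIsometryOnBasis

end HilbertBasis

/-- The vectors `e m` as a Hilbert basis of `H`, which makes the results on Hilbert bases
apply to `MapsBasis`. -/
def stdHilbertBasis : HilbertBasis ℕ+ ℂ H := .ofRepr (.refl ℂ H)

theorem stdHilbertBasis_apply (m : ℕ+) : stdHilbertBasis m = e m :=
  (stdHilbertBasis.repr_symm_single m).symm

theorem MapsBasis.isPartialIsometryOnBasis {S : H →L[ℂ] H} {a b : ℕ+ → ℕ+}
    (h : MapsBasis S a b) (hb : Function.Injective b) :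
    IsPartialIsometryOnBasis stdHilbertBasis S (Set.range a) where
  orthonormal := by
    have hS : (fun i : Set.range a => S (stdHilbertBasis i)) =
        stdHilbertBasis ∘ b ∘ Set.rangeSplitting a := by
      funext i
      simp only [Function.comp_apply, stdHilbertBasis_apply]
      rw [← h.1, Set.apply_rangeSplitting a]
    rw [hS]
    exact stdHilbertBasis.orthonormal.comp _ (hb.comp (Set.rangeSplitting_injective a))
  apply_eq_zero m hm := by
    rw [stdHilbertBasis_apply]
    exact h.2 m fun n hmn => hm ⟨n, hmn.symm⟩

section ResidueClasses

/-- The positive integers congruent to `-d` modulo `c`. As an initial set it treats `n ↦ c * n - d`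
and `n ↦ c * n` uniformly, since `d = 0` is allowed. -/
def negResidueClass (c d : ℕ) : Set ℕ+ := {m | c ∣ m + d}

theorem mem_negResidueClass {c d : ℕ} {m : ℕ+} : m ∈ negResidueClass c d ↔ c ∣ m + d := Iff.rfl

variable {c d : ℕ+}

theorem mul_sub_add_cancel (hdc : d < c) (n : ℕ+) : c * n - d + d = c * n :=
  PNat.sub_add_of_lt (hdc.trans_le (le_mul_of_one_le_right' one_le))

theorem mul_sub_injective (hdc : d < c) : Function.Injective fun n : ℕ+ => c * n - d := by
  intro n l hnl
  apply mul_left_cancel (a := c)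
  rw [← mul_sub_add_cancel hdc n, ← mul_sub_add_cancel hdc l]
  exact congrArg (· + d) hnl

theorem range_mul_sub (hdc : d < c) :
    Set.range (fun n : ℕ+ => c * n - d) = negResidueClass c d := by
  ext m
  rw [mem_negResidueClass, ← PNat.add_coe, ← PNat.dvd_iff]
  constructor
  · rintro ⟨n, rfl⟩
    exact ⟨n, mul_sub_add_cancel hdc n⟩
  · rintro ⟨n, hn⟩
    exact ⟨n, add_right_cancel ((mul_sub_add_cancel hdc n).trans hn.symm)⟩

theorem range_mul (c : ℕ+) : Set.range (fun n : ℕ+ => c * n) = negResidueClass c 0 := by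
  ext m
  rw [mem_negResidueClass, add_zero, ← PNat.dvd_iff]
  exact exists_congr fun n => eq_comm

open Fin.CommRing in
theorem existsUnique_mem_negResidueClass (c : ℕ) [NeZero c] (m : ℕ+) :
    ∃! d : Fin c, m ∈ negResidueClass c d := by
  have mem_iff (d : Fin c) : m ∈ negResidueClass c d ↔ d = -((m : ℕ) : Fin c) := by
    rw [mem_negResidueClass, ← Fin.natCast_eq_zero, Nat.cast_add, Fin.cast_val_eq_self,
      add_comm, eq_neg_iff_add_eq_zero]
  simp only [mem_iff, existsUnique_eq]

end ResidueClasses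

theorem MapsBasis.isPartialIsometryOnBasis_mul_sub {S : H →L[ℂ] H} {c d : ℕ+} {b : ℕ+ → ℕ+}
    (h : MapsBasis S (fun n => c * n - d) b) (hdc : d < c) (hb : Function.Injective b) :
    IsPartialIsometryOnBasis stdHilbertBasis S (negResidueClass c d) :=
  range_mul_sub hdc ▸ h.isPartialIsometryOnBasis hb

theorem MapsBasis.isPartialIsometryOnBasis_mul {S : H →L[ℂ] H} {c : ℕ+} {b : ℕ+ → ℕ+}
    (h : MapsBasis S (fun n => c * n) b) (hb : Function.Injective b) :
    IsPartialIsometryOnBasis stdHilbertBasis S (negResidueClass c 0) :=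
  range_mul c ▸ h.isPartialIsometryOnBasis hb

/-- Each of `S_{j1}, …, S_{j8}` is a partial isometry and `Σₖ S_{jk}* S_{jk} = 1` (the quantum-channel condition for the Hamiltonian path `H₆` of `G(Π₃)`). -/
theorem stmt_14
    (Sj1 Sj2 Sj3 Sj4 Sj5 Sj6 Sj7 Sj8 : H →L[ℂ] H)
    (hSj1 : MapsBasis Sj1 (fun n => 8 * n - 3) (fun n => 32 * n - 15))
    (hSj2 : MapsBasis Sj2 (fun n => 8 * n - 2) (fun n => 48 * n - 35))
    (hSj3 : MapsBasis Sj3 (fun n => 8 * n) (fun n => 48 * n - 10))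
    (hSj4 : MapsBasis Sj4 (fun n => 8 * n - 1) (fun n => 40 * n - 32))
    (hSj5 : MapsBasis Sj5 (fun n => 8 * n - 4) (fun n => 40 * n - 1))
    (hSj6 : MapsBasis Sj6 (fun n => 8 * n - 5) (fun n => 32 * n - 28))
    (hSj7 : MapsBasis Sj7 (fun n => 8 * n - 6) (fun n => 24 * n - 21))
    (hSj8 : MapsBasis Sj8 (fun n => 8 * n - 7) (fun n => 24 * n - 22)) :
    (Sj1 ∘L adjoint Sj1 ∘L Sj1 = Sj1 ∧
    Sj2 ∘L adjoint Sj2 ∘L Sj2 = Sj2 ∧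
    Sj3 ∘L adjoint Sj3 ∘L Sj3 = Sj3 ∧
    Sj4 ∘L adjoint Sj4 ∘L Sj4 = Sj4 ∧
    Sj5 ∘L adjoint Sj5 ∘L Sj5 = Sj5 ∧
    Sj6 ∘L adjoint Sj6 ∘L Sj6 = Sj6 ∧
    Sj7 ∘L adjoint Sj7 ∘L Sj7 = Sj7 ∧
    Sj8 ∘L adjoint Sj8 ∘L Sj8 = Sj8) ∧
    adjoint Sj1 ∘L Sj1 + adjoint Sj2 ∘L Sj2 + adjoint Sj3 ∘L Sj3 + adjoint Sj4 ∘L Sj4 + adjoint Sj5 ∘L Sj5 + adjoint Sj6 ∘L Sj6 + adjoint Sj7 ∘L Sj7 + adjoint Sj8 ∘L Sj8 = 1 := by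
  -- Listed so that the initial set of the entry with index `d` is the class of `-d` modulo `8`.
  let S : Fin 8 → H →L[ℂ] H := ![Sj3, Sj4, Sj2, Sj1, Sj5, Sj6, Sj7, Sj8]
  have hS : ∀ d, IsPartialIsometryOnBasis stdHilbertBasis (S d) (negResidueClass 8 d) := by
    intro d
    fin_cases d
    · exact hSj3.isPartialIsometryOnBasis_mul (mul_sub_injective (by decide))
    · exact hSj4.isPartialIsometryOnBasis_mul_sub (by decide) (mul_sub_injective (by decide))
    · exact hSj2.isPartialIsometryOnBasis_mul_sub (by decide) (mul_sub_injective (by decide))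
    · exact hSj1.isPartialIsometryOnBasis_mul_sub (by decide) (mul_sub_injective (by decide))
    · exact hSj5.isPartialIsometryOnBasis_mul_sub (by decide) (mul_sub_injective (by decide))
    · exact hSj6.isPartialIsometryOnBasis_mul_sub (by decide) (mul_sub_injective (by decide))
    · exact hSj7.isPartialIsometryOnBasis_mul_sub (by decide) (mul_sub_injective (by decide))
    · exact hSj8.isPartialIsometryOnBasis_mul_sub (by decide) (mul_sub_injective (by decide))
  have hS_isometry (d) : S d ∘L adjoint (S d) ∘L S d = S d := (hS d).comp_adjoint_comp
  have hS_sum : ∑ d, adjoint (S d) ∘L S d = 1 :=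
    IsPartialIsometryOnBasis.sum_adjoint_comp_eq_one hS (existsUnique_mem_negResidueClass 8)
  refine ⟨⟨hS_isometry 3, hS_isometry 2, hS_isometry 0, hS_isometry 1, hS_isometry 4,
    hS_isometry 5, hS_isometry 6, hS_isometry 7⟩, ?_⟩
  rw [← hS_sum, Fin.sum_univ_eight]
  change _ = adjoint Sj3 ∘L Sj3 + adjoint Sj4 ∘L Sj4 + adjoint Sj2 ∘L Sj2 + adjoint Sj1 ∘L Sj1 +
    adjoint Sj5 ∘L Sj5 + adjoint Sj6 ∘L Sj6 + adjoint Sj7 ∘L Sj7 + adjoint Sj8 ∘L Sj8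
  abel
end
end

section
/- The smallest closed star-subalgebra of the algebra of bounded operators on H containing the eight operators S_{e1}, …, S_{e8} is infinite-dimensional as a complex vector space (so the graph C*-algebra C*(Π₃) generated by the Cuntz–Krieger G(Π₃)-family is infinite-dimensional). -/
/- Hilbert space `H = ℓ²(ℕ₊, ℂ)` with standard orthonormal basis `(e m)` indexed by the
positive integers `ℕ+`. -/

noncomputable section

open ContinuousLinearMap

/-!
The eight operators permute the residue classes of the index modulo `8` cyclically. With indices
counted from `0`, they send the basis vector at `8 t + r` to the one at `8 (c t) + (r + 1)`, the
residue being read modulo `8`, with factors `c = 3, 3, 4, 6, 6, 5, 5, 4` for `r = 0, …, 7`. Hence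
their product `W` once around the cycle sends the basis vector at `8 t` to the one at `8 (C t)`,
where `C > 1` is the product of the factors. The vectors obtained by applying the powers of `W` to
the basis vector at `8` are therefore distinct basis vectors, so the powers of `W` are linearly
independent.
-/

theorem not_finiteDimensional_of_linearIndependent_pow {K B : Type*} [Field K] [Ring B]
    [Algebra K B] {A : Subalgebra K B} {b : B} (hb : b ∈ A)
    (hpow : LinearIndependent K fun k : ℕ => b ^ k) : ¬ FiniteDimensional K A := by
  intro _
  have hpow_in_A : LinearIndependent K fun k : ℕ => (⟨b, hb⟩ : A) ^ k :=
    LinearIndependent.of_comp A.val.toLinearMap hpow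
  exact not_finite_iff_infinite.mpr inferInstance hpow_in_A.finite

theorem not_finiteDimensional_topologicalClosure_starAdjoin {K B : Type*} [Field K] [StarRing K]
    [TopologicalSpace B] [Ring B] [IsTopologicalRing B] [StarRing B] [ContinuousStar B]
    [Algebra K B] [StarModule K B] {s : Set B}
    (hs : ¬ FiniteDimensional K (Algebra.adjoin K s)) :
    ¬ FiniteDimensional K (StarAlgebra.adjoin K s).topologicalClosure := by
  intro _
  have adjoin_le : Algebra.adjoin K s ≤
      (StarAlgebra.adjoin K s).topologicalClosure.toSubalgebra :=
    Algebra.adjoin_le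
      ((StarAlgebra.subset_adjoin K s).trans (StarSubalgebra.le_topologicalClosure _))
  exact hs (.of_injective (Subalgebra.inclusion adjoin_le).toLinearMap
    (Subalgebra.inclusion_injective adjoin_le))

theorem linearIndependent_e : LinearIndependent ℂ e := by
  let b : HilbertBasis ℕ+ ℂ H := default
  have hb : ⇑b = e := funext fun m => (b.repr_symm_single m).symm
  exact hb ▸ b.orthonormal.linearIndependent

theorem mul_succPNat_sub {p q : ℕ+} (hq : q < p) (t : ℕ) :
    p * t.succPNat - q = (p * t + (p - q - 1 : ℕ)).succPNat := by
  have hlt : q < p * t.succPNat := hq.trans_le (le_mul_of_one_le_right' one_le)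
  rw [← PNat.coe_lt_coe] at hq
  apply PNat.eq
  rw [PNat.sub_coe, if_pos hlt, PNat.mul_coe, Nat.succPNat_coe, Nat.succPNat_coe, Nat.mul_succ]
  lia

theorem mul_succPNat (p : ℕ+) (t : ℕ) :
    p * t.succPNat = (p * t + (p - 1 : ℕ)).succPNat := by
  have hp := p.pos
  apply PNat.eq
  rw [PNat.mul_coe, Nat.succPNat_coe, Nat.succPNat_coe, Nat.mul_succ]
  lia

/-- `S` carries the residue class of `r` modulo `N` to that of `s`, multiplying the quotient by `c`.
The index `m : ℕ+` of a basis vector is written as `Nat.succPNat (m - 1)`, and it is `m - 1` that is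
divided by `N`, so that the residues run from `0` to `N - 1`. -/
def ScalesResidue (N : ℕ) (S : H →L[ℂ] H) (r s c : ℕ) : Prop :=
  ∀ t : ℕ, S (e (N * t + r).succPNat) = e (N * (c * t) + s).succPNat

namespace ScalesResidue

variable {N r s u c d : ℕ} {S T : H →L[ℂ] H}

theorem mul (hT : ScalesResidue N T s u d) (hS : ScalesResidue N S r s c) :
    ScalesResidue N (T * S) r u (d * c) := fun t => by
  rw [mul_apply_eq_comp, hS t, hT (c * t), mul_assoc]

theorem pow (hS : ScalesResidue N S r r c) (k : ℕ) : ScalesResidue N (S ^ k) r r (c ^ k) := by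
  induction k with
  | zero => exact fun t => by simp
  | succ k ih => simpa only [pow_succ] using ih.mul hS

theorem linearIndependent_pow (hS : ScalesResidue N S r r c) (hN : N ≠ 0) (hc : 1 < c) :
    LinearIndependent ℂ fun k : ℕ => S ^ k := by
  have orbit (k : ℕ) : (S ^ k) (e (N + r).succPNat) = e (N * c ^ k + r).succPNat := by
    simpa only [mul_one] using hS.pow k 1
  have index_injective : Function.Injective fun k : ℕ => (N * c ^ k + r).succPNat := by
    intro k l hkl
    have hpow : N * c ^ k = N * c ^ l := Nat.add_right_cancel (Nat.succPNat_injective hkl)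
    exact Nat.pow_right_injective hc (Nat.mul_left_cancel (Nat.pos_of_ne_zero hN) hpow)
  have linearIndependent_orbit : LinearIndependent ℂ fun k : ℕ => (S ^ k) (e (N + r).succPNat) := by
    simpa only [orbit, Function.comp_def] using linearIndependent_e.comp _ index_injective
  exact .of_comp (apply ℂ H (e (N + r).succPNat)).toLinearMap linearIndependent_orbit

end ScalesResidue

theorem stmt_18_general
    (Se1 Se2 Se3 Se4 Se5 Se6 Se7 Se8 : H →L[ℂ] H)
    (hSe1 : ∀ n : ℕ+, Se1 (e (8 * n)) = e (32 * n - 31))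
    (hSe2 : ∀ n : ℕ+, Se2 (e (8 * n - 1)) = e (40 * n - 32))
    (hSe3 : ∀ n : ℕ+, Se3 (e (8 * n - 2)) = e (40 * n - 33))
    (hSe4 : ∀ n : ℕ+, Se4 (e (8 * n - 3)) = e (48 * n - 42))
    (hSe5 : ∀ n : ℕ+, Se5 (e (8 * n - 4)) = e (48 * n - 43))
    (hSe6 : ∀ n : ℕ+, Se6 (e (8 * n - 5)) = e (32 * n - 28))
    (hSe7 : ∀ n : ℕ+, Se7 (e (8 * n - 6)) = e (24 * n - 21))
    (hSe8 : ∀ n : ℕ+, Se8 (e (8 * n - 7)) = e (24 * n - 22)) :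
    ¬ FiniteDimensional ℂ
      (Algebra.adjoin ℂ ({Se1, Se2, Se3, Se4, Se5, Se6, Se7, Se8} : Set (H →L[ℂ] H))) := by
  have h1 : ScalesResidue 8 Se1 7 0 4 := fun t => by
    -- `↓` rewrites `32 * n - 31` before `mul_succPNat` can rewrite the product inside it.
    simpa [mul_succPNat, ↓mul_succPNat_sub, ← mul_assoc] using hSe1 t.succPNat
  have h2 : ScalesResidue 8 Se2 6 7 5 := fun t => by
    simpa [mul_succPNat_sub, ← mul_assoc] using hSe2 t.succPNat
  have h3 : ScalesResidue 8 Se3 5 6 5 := fun t => by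
    simpa [mul_succPNat_sub, ← mul_assoc] using hSe3 t.succPNat
  have h4 : ScalesResidue 8 Se4 4 5 6 := fun t => by
    simpa [mul_succPNat_sub, ← mul_assoc] using hSe4 t.succPNat
  have h5 : ScalesResidue 8 Se5 3 4 6 := fun t => by
    simpa [mul_succPNat_sub, ← mul_assoc] using hSe5 t.succPNat
  have h6 : ScalesResidue 8 Se6 2 3 4 := fun t => by
    simpa [mul_succPNat_sub, ← mul_assoc] using hSe6 t.succPNat
  have h7 : ScalesResidue 8 Se7 1 2 3 := fun t => by
    simpa [mul_succPNat_sub, ← mul_assoc] using hSe7 t.succPNat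
  have h8 : ScalesResidue 8 Se8 0 1 3 := fun t => by
    simpa [mul_succPNat_sub, ← mul_assoc] using hSe8 t.succPNat
  have cycle := h1.mul <| h2.mul <| h3.mul <| h4.mul <| h5.mul <| h6.mul <| h7.mul h8
  refine not_finiteDimensional_of_linearIndependent_pow ?_
    (cycle.linearIndependent_pow (by norm_num) (by norm_num))
  repeat' apply mul_mem
  all_goals exact Algebra.subset_adjoin (by simp)

/-- The smallest closed star-subalgebra of `B(H)` containing the eight operators
`S_{e1}, …, S_{e8}` is infinite-dimensional over `ℂ`. -/
theorem stmt_18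
    (Se1 Se2 Se3 Se4 Se5 Se6 Se7 Se8 : H →L[ℂ] H)
    (hSe1 : MapsBasis Se1 (fun n => 8 * n) (fun n => 32 * n - 31))
    (hSe2 : MapsBasis Se2 (fun n => 8 * n - 1) (fun n => 40 * n - 32))
    (hSe3 : MapsBasis Se3 (fun n => 8 * n - 2) (fun n => 40 * n - 33))
    (hSe4 : MapsBasis Se4 (fun n => 8 * n - 3) (fun n => 48 * n - 42))
    (hSe5 : MapsBasis Se5 (fun n => 8 * n - 4) (fun n => 48 * n - 43))
    (hSe6 : MapsBasis Se6 (fun n => 8 * n - 5) (fun n => 32 * n - 28))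
    (hSe7 : MapsBasis Se7 (fun n => 8 * n - 6) (fun n => 24 * n - 21))
    (hSe8 : MapsBasis Se8 (fun n => 8 * n - 7) (fun n => 24 * n - 22)) :
    ¬ FiniteDimensional ℂ
      ((StarAlgebra.adjoin ℂ
        ({Se1, Se2, Se3, Se4, Se5, Se6, Se7, Se8} : Set (H →L[ℂ] H))).topologicalClosure) := by
  exact not_finiteDimensional_topologicalClosure_starAdjoin <|
    stmt_18_general Se1 Se2 Se3 Se4 Se5 Se6 Se7 Se8
      hSe1.1 hSe2.1 hSe3.1 hSe4.1 hSe5.1 hSe6.1 hSe7.1 hSe8.1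
end
end
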